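/- Let A be a locally compact Hausdorff space, let B and C be topological spaces, and let f : A → B and g : C → B be continuous. Let E = {(a, γ, c) ∈ A × B^{[0,1]} × C : γ(0) = f(a), γ(1) = g(c)} (with B^{[0,1]} carrying the compact-open topology), and let π : E → A be the projection. Then the space Γ(A, E) of continuous sections of π, with the compact-open topology, is homeomorphic to the homotopy fiber over f of the map Map(A, C) → Map(A, B) given by postcomposition with g, where both mapping spaces carry the compact-open topology. -/

import Mathlib

/-!
A section of `π` is a map `a ↦ (a, γ_a, F a)` with `γ_a` a path from `f a` to `g (F a)`. Exchanging
the two variables of `(a, t) ↦ γ_a t` turns the family `γ` into a path `t ↦ (a ↦ γ_a t)` in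
`Map(A, B)` from `f` to `g ∘ F`. The homotopy fiber asks for a path from `g ∘ F` to `f`, so time is
also reversed by `unitInterval.symm`. The two constructions are mutually inverse.

Continuity in both directions follows from the exponential law: a map into a mapping space is
continuous as soon as its uncurried form is (`ContinuousMap.continuous_of_continuous_uncurry`), and
the uncurried forms are built from evaluations `Map(A, -) × A → -` and
`Map([0,1], -) × [0,1] → -`, which are continuous because `A` and `[0,1]` are locally compact.
-/

/-- The homotopy fiber of `F : X → Y` over `y₀`: pairs `(x, γ)` with `γ : [0,1] → Y` a path
from `F(x)` to `y₀`, topologized as a subspace of `X × C([0,1], Y)` with the compact-open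
topology on the path space. -/
def HomotopyFiber {X Y : Type} [TopologicalSpace X] [TopologicalSpace Y]
    (F : C(X, Y)) (y₀ : Y) : Type :=
  {z : X × C(unitInterval, Y) // z.2 0 = F z.1 ∧ z.2 1 = y₀}

instance {X Y : Type} [TopologicalSpace X] [TopologicalSpace Y] (F : C(X, Y)) (y₀ : Y) :
    TopologicalSpace (HomotopyFiber F y₀) :=
  instTopologicalSpaceSubtype

/-- The total space `E = {(a, γ, c) : γ(0) = f(a), γ(1) = g(c)}`, as a subspace of
`A × C([0,1], B) × C`. -/
def PathSpaceE {A B C : Type} [TopologicalSpace A] [TopologicalSpace B] [TopologicalSpace C]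
    (f : C(A, B)) (g : C(C, B)) : Type :=
  {u : A × ContinuousMap unitInterval B × C // u.2.1 0 = f u.1 ∧ u.2.1 1 = g u.2.2}

instance {A B C : Type} [TopologicalSpace A] [TopologicalSpace B] [TopologicalSpace C]
    (f : C(A, B)) (g : C(C, B)) : TopologicalSpace (PathSpaceE f g) :=
  instTopologicalSpaceSubtype

/-- The space of continuous sections of the projection `π : E → A`, with the compact-open
topology. -/
def SectionSpace {A B C : Type} [TopologicalSpace A] [TopologicalSpace B] [TopologicalSpace C]
    (f : C(A, B)) (g : C(C, B)) : Type :=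
  {s : ContinuousMap A (PathSpaceE f g) // ∀ a : A, (s a).1.1 = a}

instance {A B C : Type} [TopologicalSpace A] [TopologicalSpace B] [TopologicalSpace C]
    (f : C(A, B)) (g : C(C, B)) : TopologicalSpace (SectionSpace f g) :=
  instTopologicalSpaceSubtype

/-- Postcomposition with `g : C → B`, as a continuous map `Map(A, C) → Map(A, B)` between
mapping spaces with the compact-open topology. -/
def postcompMap {A B C : Type} [TopologicalSpace A] [TopologicalSpace B] [TopologicalSpace C]
    (g : C(C, B)) : ContinuousMap (ContinuousMap A C) (ContinuousMap A B) :=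
  ⟨fun F => g.comp F, ContinuousMap.continuous_postcomp g⟩

section

variable {A B C : Type} [TopologicalSpace A] [TopologicalSpace B] [TopologicalSpace C]

theorem PathSpaceE.continuous_val (f : C(A, B)) (g : C(C, B)) :
    Continuous (fun u : PathSpaceE f g => u.1) :=
  continuous_subtype_val

theorem SectionSpace.continuous_val (f : C(A, B)) (g : C(C, B)) :
    Continuous (fun s : SectionSpace f g => s.1) :=
  continuous_subtype_val

theorem HomotopyFiber.continuous_val (F : C(A, B)) (y₀ : B) :
    Continuous (fun z : HomotopyFiber F y₀ => z.1) :=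
  continuous_subtype_val

variable [LocallyCompactSpace A]

theorem SectionSpace.continuous_eval (f : C(A, B)) (g : C(C, B)) :
    Continuous (fun p : SectionSpace f g × A => (p.1.1 p.2).1) :=
  (PathSpaceE.continuous_val f g).comp
    (((SectionSpace.continuous_val f g).comp continuous_fst).eval continuous_snd)

theorem SectionSpace.continuous_eval_path (f : C(A, B)) (g : C(C, B)) :
    Continuous (fun p : (SectionSpace f g × unitInterval) × A =>
      (p.1.1.1 p.2).1.2.1 (unitInterval.symm p.1.2)) := by
  have h : Continuous (fun p : (SectionSpace f g × unitInterval) × A => (p.1.1.1 p.2).1) :=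
    (SectionSpace.continuous_eval f g).comp
      ((continuous_fst.comp continuous_fst).prodMk continuous_snd)
  exact h.snd.fst.eval (unitInterval.continuous_symm.comp (continuous_snd.comp continuous_fst))

theorem HomotopyFiber.continuous_eval_path (f : C(A, B)) (g : C(C, B)) :
    Continuous (fun p : (HomotopyFiber (postcompMap (A := A) g) f × A) × unitInterval =>
      p.1.1.1.2 (unitInterval.symm p.2) p.1.2) := by
  have h : Continuous (fun p : (HomotopyFiber (postcompMap (A := A) g) f × A) × unitInterval =>
      p.1.1.1) :=
    (HomotopyFiber.continuous_val _ _).comp (continuous_fst.comp continuous_fst)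
  exact (h.snd.eval (unitInterval.continuous_symm.comp continuous_snd)).eval
    (continuous_snd.comp continuous_fst)

/-- The point of the homotopy fiber given by a section `a ↦ (a, γ_a, F a)`: the map `F` with the
path `t ↦ (a ↦ γ_a (1 - t))` from `g ∘ F` to `f`. -/
def SectionSpace.toHomotopyFiber (f : C(A, B)) (g : C(C, B)) (s : SectionSpace f g) :
    HomotopyFiber (postcompMap (A := A) g) f :=
  ⟨(⟨fun a => (s.1 a).1.2.2,
      ((SectionSpace.continuous_eval f g).comp (Continuous.prodMk_right s)).snd.snd⟩,
    ContinuousMap.curry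
      ⟨fun q : unitInterval × A => (s.1 q.2).1.2.1 (unitInterval.symm q.1),
        (SectionSpace.continuous_eval_path f g).comp
          ((continuous_const.prodMk continuous_fst).prodMk continuous_snd)⟩),
    by
      constructor
      · ext a
        simpa [postcompMap] using (s.1 a).2.2
      · ext a
        simpa [s.2 a] using (s.1 a).2.1⟩

/-- The section `a ↦ (a, t ↦ Γ (1 - t) a, F a)` given by a point `(F, Γ)` of the homotopy
fiber. -/
def HomotopyFiber.toSectionSpace (f : C(A, B)) (g : C(C, B))
    (z : HomotopyFiber (postcompMap (A := A) g) f) : SectionSpace f g :=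
  ⟨⟨fun a => ⟨(a,
      (ContinuousMap.curry
        ⟨fun q : A × unitInterval => z.1.2 (unitInterval.symm q.2) q.1,
          (HomotopyFiber.continuous_eval_path f g).comp
            ((continuous_const.prodMk continuous_fst).prodMk continuous_snd)⟩ a, z.1.1 a)),
      by
        constructor
        · simpa using DFunLike.congr_fun z.2.2 a
        · simpa [postcompMap] using DFunLike.congr_fun z.2.1 a⟩,
    by
      refine Continuous.subtype_mk (continuous_id.prodMk (Continuous.prodMk ?_ ?_)) _
      · exact ContinuousMap.continuous _
      · exact ContinuousMap.continuous _⟩,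
    fun _ => rfl⟩

theorem SectionSpace.continuous_toHomotopyFiber (f : C(A, B)) (g : C(C, B)) :
    Continuous (SectionSpace.toHomotopyFiber f g) := by
  refine Continuous.subtype_mk (Continuous.prodMk ?_ ?_) _
  · exact ContinuousMap.continuous_of_continuous_uncurry _
      (SectionSpace.continuous_eval f g).snd.snd
  -- The target is the iterated mapping space `Map([0,1], Map(A, B))`: uncurry twice.
  · refine ContinuousMap.continuous_of_continuous_uncurry _ ?_
    exact ContinuousMap.continuous_of_continuous_uncurry _
      (SectionSpace.continuous_eval_path f g)

theorem HomotopyFiber.continuous_toSectionSpace (f : C(A, B)) (g : C(C, B)) :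
    Continuous (HomotopyFiber.toSectionSpace f g) := by
  refine Continuous.subtype_mk (ContinuousMap.continuous_of_continuous_uncurry _ ?_) _
  refine Continuous.subtype_mk (continuous_snd.prodMk (Continuous.prodMk ?_ ?_)) _
  · exact ContinuousMap.continuous_of_continuous_uncurry _
      (HomotopyFiber.continuous_eval_path f g)
  · exact ((HomotopyFiber.continuous_val _ _).comp continuous_fst).fst.eval continuous_snd

end

/-- For `A` locally compact Hausdorff, the space of sections of
`π : E → A` is homeomorphic to the homotopy fiber over `f` of the postcomposition map
`Map(A, C) → Map(A, B)`, `F ↦ g ∘ F`. -/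
theorem sectionSpace_homeomorph_hofiber {A B C : Type} [TopologicalSpace A]
    [TopologicalSpace B] [TopologicalSpace C] [LocallyCompactSpace A] [T2Space A]
    (f : C(A, B)) (g : C(C, B)) :
    Nonempty (SectionSpace f g ≃ₜ HomotopyFiber (postcompMap (A := A) g) f) := by
  exact ⟨{
    toFun := SectionSpace.toHomotopyFiber f g
    invFun := HomotopyFiber.toSectionSpace f g
    left_inv := fun s => by
      refine Subtype.ext (ContinuousMap.ext fun a => Subtype.ext (Prod.ext ?_ (Prod.ext ?_ rfl)))
      · exact (s.2 a).symm
      · refine ContinuousMap.ext fun t => ?_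
        change (s.1 a).1.2.1 (unitInterval.symm (unitInterval.symm t)) = _
        rw [unitInterval.symm_symm]
    right_inv := fun z => by
      refine Subtype.ext (Prod.ext rfl (ContinuousMap.ext fun t => ContinuousMap.ext fun a => ?_))
      change z.1.2 (unitInterval.symm (unitInterval.symm t)) a = _
      rw [unitInterval.symm_symm]
    continuous_toFun := SectionSpace.continuous_toHomotopyFiber f g
    continuous_invFun := HomotopyFiber.continuous_toSectionSpace f g }⟩
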